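/- Let ρ ∈ (0,1] and let φ : (0,∞) → ℝ be bounded and uniformly ρ-Hölder continuous. For an integer N ≥ 2 and λ > 0 set μ_N(λ) := (1/(N−1)!) ∫_0^∞ φ(1/s) ((N−1)sλ)^N e^{−(N−1)sλ} ds/s. Then for every λ > 0, μ_N(λ) → φ(λ) as N → ∞. -/

import Mathlib

open MeasureTheory Set Filter

open ProbabilityTheory
open scoped Topology

/-!
In the variable `s`, the kernel defining `μ_N(λ)` is the density of the gamma distribution of shape
`N` and rate `(N - 1)λ`. Its mean `N / ((N - 1)λ)` tends to `1 / λ` and its variance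
`N / ((N - 1)λ)²` tends to `0`, so by Chebyshev's inequality these distributions concentrate at
`1 / λ`, and the integrals of the bounded function `s ↦ φ (1 / s)` converge to its value there.
-/

section Concentration

variable {ι X E : Type*} {l : Filter ι} [MeasurableSpace X] {μ : ι → Measure X} {x₀ : X}

theorem tendsto_integral_of_tendsto_measureReal_compl [TopologicalSpace X] [OpensMeasurableSpace X]
    [NormedAddCommGroup E] [NormedSpace ℝ E] [CompleteSpace E] {f : X → E} {M : ℝ}
    (hμ : ∀ᶠ i in l, IsProbabilityMeasure (μ i))
    (hconc : ∀ U ∈ 𝓝 x₀, Tendsto (fun i ↦ (μ i).real Uᶜ) l (𝓝 0))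
    (hmeas : ∀ᶠ i in l, AEStronglyMeasurable f (μ i))
    (hbdd : ∀ᶠ i in l, ∀ᵐ x ∂μ i, ‖f x‖ ≤ M) (hcont : ContinuousAt f x₀) :
    Tendsto (fun i ↦ ∫ x, f x ∂μ i) l (𝓝 (f x₀)) := by
  rw [Metric.tendsto_nhds]
  intro ε hε
  obtain ⟨U, hU, hUo, hx₀U⟩ :=
    mem_nhds_iff.mp (hcont.eventually (Metric.ball_mem_nhds (f x₀) (half_pos hε)))
  set C : ℝ := M + ‖f x₀‖
  have hlim : Tendsto (fun i ↦ ε / 2 + C * (μ i).real Uᶜ) l (𝓝 (ε / 2)) := by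
    simpa only [mul_zero, add_zero] using
      ((hconc U (hUo.mem_nhds hx₀U)).const_mul C).const_add (ε / 2)
  filter_upwards [hμ, hmeas, hbdd, hlim.eventually_lt_const (half_lt_self hε)]
    with i _ hmeas hbdd hlt
  have hint : Integrable f (μ i) := .of_bound hmeas M hbdd
  have hCU : Integrable (Uᶜ.indicator fun _ ↦ C) (μ i) :=
    (integrable_const C).indicator hUo.measurableSet.compl
  have hpointwise : ∀ᵐ x ∂μ i, ‖f x - f x₀‖ ≤ ε / 2 + Uᶜ.indicator (fun _ ↦ C) x := by
    filter_upwards [hbdd] with x hx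
    by_cases hxU : x ∈ U
    · have hball : dist (f x) (f x₀) < ε / 2 := hU hxU
      simpa [hxU, dist_eq_norm] using hball.le
    · rw [indicator_of_mem hxU]
      linarith [norm_sub_le (f x) (f x₀)]
  calc dist (∫ x, f x ∂μ i) (f x₀)
      = ‖∫ x, (f x - f x₀) ∂μ i‖ := by
        simp [dist_eq_norm, integral_sub hint (integrable_const _)]
    _ ≤ ∫ x, (ε / 2 + Uᶜ.indicator (fun _ ↦ C) x) ∂μ i :=
        norm_integral_le_of_norm_le ((integrable_const _).add hCU) hpointwise
    _ = ε / 2 + C * (μ i).real Uᶜ := by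
        rw [integral_add (integrable_const _) hCU, integral_indicator_const _
          hUo.measurableSet.compl]
        simp [mul_comm]
    _ < ε := hlt

theorem tendsto_measureReal_compl_of_tendsto_integral_dist_pow [PseudoMetricSpace X] {p : ℕ}
    (hint : ∀ᶠ i in l, Integrable (fun x ↦ dist x x₀ ^ p) (μ i))
    (hlim : Tendsto (fun i ↦ ∫ x, dist x x₀ ^ p ∂μ i) l (𝓝 0)) {U : Set X} (hU : U ∈ 𝓝 x₀) :
    Tendsto (fun i ↦ (μ i).real Uᶜ) l (𝓝 0) := by
  obtain ⟨δ, hδ, hδU⟩ := Metric.mem_nhds_iff.mp hU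
  have hsubset : Uᶜ ⊆ {x | δ ^ p ≤ dist x x₀ ^ p} := fun x hxU ↦
    pow_le_pow_left₀ hδ.le (not_lt.mp fun hx ↦ hxU (hδU hx)) p
  have hbound : Tendsto (fun i ↦ (∫ x, dist x x₀ ^ p ∂μ i) / δ ^ p) l (𝓝 0) := by
    simpa only [zero_div] using hlim.div_const (δ ^ p)
  refine squeeze_zero' (.of_forall fun i ↦ measureReal_nonneg) ?_ hbound
  filter_upwards [hint] with i hint
  have hfin : μ i {x | δ ^ p ≤ dist x x₀ ^ p} ≠ ⊤ :=
    (hint.measure_ge_lt_top (pow_pos hδ p)).ne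
  rw [le_div_iff₀' (pow_pos hδ p)]
  calc δ ^ p * (μ i).real Uᶜ
      ≤ δ ^ p * (μ i).real {x | δ ^ p ≤ dist x x₀ ^ p} := by gcongr
    _ ≤ ∫ x, dist x x₀ ^ p ∂μ i :=
        mul_meas_ge_le_integral_of_nonneg (.of_forall fun x ↦ by positivity) hint _

end Concentration

section GammaMeasure

variable {E : Type*} [NormedAddCommGroup E] [NormedSpace ℝ E]

lemma measurable_gammaPDF (a r : ℝ) : Measurable (gammaPDF a r) :=
  (measurable_gammaPDFReal a r).ennreal_ofReal

lemma gammaMeasure_eq_withDensity_restrict_Ioi (a r : ℝ) :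
    gammaMeasure a r = (volume.restrict (Ioi 0)).withDensity (gammaPDF a r) := by
  have hpos : ∀ᵐ x ∂gammaMeasure a r, x ∈ Ioi 0 := by
    rw [gammaMeasure, ae_withDensity_iff (measurable_gammaPDF a r)]
    filter_upwards [Measure.ae_ne volume 0] with x hx0 hpdf
    exact (le_of_not_gt fun hx ↦ hpdf (gammaPDF_of_neg hx)).lt_of_ne' hx0
  rw [← restrict_withDensity measurableSet_Ioi, ← gammaMeasure,
    Measure.restrict_eq_self_of_ae_mem hpos]

lemma gammaMeasure_absolutelyContinuous_restrict_Ioi (a r : ℝ) :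
    gammaMeasure a r ≪ volume.restrict (Ioi 0) :=
  gammaMeasure_eq_withDensity_restrict_Ioi a r ▸ withDensity_absolutelyContinuous _ _

lemma integral_gammaMeasure_eq_integral_Ioi_smul {a r : ℝ} (ha : 0 < a) (hr : 0 < r) (f : ℝ → E) :
    ∫ x, f x ∂gammaMeasure a r =
      ∫ x in Ioi 0, (r ^ a / Real.Gamma a * x ^ (a - 1) * Real.exp (-(r * x))) • f x := by
  rw [gammaMeasure_eq_withDensity_restrict_Ioi, integral_withDensity_eq_integral_toReal_smul
    (measurable_gammaPDF a r) (.of_forall fun x ↦ ENNReal.ofReal_lt_top)]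
  refine setIntegral_congr_fun measurableSet_Ioi fun x hx ↦ ?_
  rw [gammaPDF, ENNReal.toReal_ofReal (gammaPDFReal_nonneg ha hr x), gammaPDFReal,
    if_pos (mem_Ioi.mp hx).le]

theorem integral_pow_gammaMeasure {a r : ℝ} (ha : 0 < a) (hr : 0 < r) (k : ℕ) :
    ∫ x, x ^ k ∂gammaMeasure a r = Real.Gamma (a + k) / (Real.Gamma a * r ^ k) := by
  calc ∫ x, x ^ k ∂gammaMeasure a r
      = ∫ x in Ioi 0, r ^ a / Real.Gamma a * (x ^ (a + k - 1) * Real.exp (-(r * x))) := by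
        rw [integral_gammaMeasure_eq_integral_Ioi_smul ha hr]
        refine setIntegral_congr_fun measurableSet_Ioi fun x hx ↦ ?_
        rw [add_sub_right_comm, Real.rpow_add_natCast (ne_of_gt hx), smul_eq_mul]
        ring
    _ = Real.Gamma (a + k) / (Real.Gamma a * r ^ k) := by
        rw [integral_const_mul, Real.integral_rpow_mul_exp_neg_mul_Ioi (by positivity) hr,
          Real.div_rpow zero_le_one hr.le, Real.one_rpow, Real.rpow_add_natCast hr.ne']
        field_simp

lemma integrable_pow_gammaMeasure {a r : ℝ} (ha : 0 < a) (hr : 0 < r) (k : ℕ) :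
    Integrable (fun x ↦ x ^ k) (gammaMeasure a r) := by
  refine .of_integral_ne_zero ?_
  rw [integral_pow_gammaMeasure ha hr]
  exact (div_pos (Real.Gamma_pos_of_pos (by positivity)) (by positivity)).ne'

lemma integrable_id_gammaMeasure {a r : ℝ} (ha : 0 < a) (hr : 0 < r) :
    Integrable (fun x ↦ x) (gammaMeasure a r) := by
  simpa only [pow_one] using integrable_pow_gammaMeasure ha hr 1

theorem integral_id_gammaMeasure {a r : ℝ} (ha : 0 < a) (hr : 0 < r) :
    ∫ x, x ∂gammaMeasure a r = a / r := by
  calc ∫ x, x ∂gammaMeasure a r = Real.Gamma (a + 1) / (Real.Gamma a * r) := by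
        simpa only [pow_one, Nat.cast_one] using integral_pow_gammaMeasure ha hr 1
    _ = a / r := by
        rw [Real.Gamma_add_one ha.ne']
        field_simp

lemma integrable_sub_sq_gammaMeasure {a r : ℝ} (ha : 0 < a) (hr : 0 < r) (c : ℝ) :
    Integrable (fun x ↦ (x - c) ^ 2) (gammaMeasure a r) := by
  have := isProbabilityMeasure_gammaMeasure ha hr
  have hlin := ((integrable_id_gammaMeasure ha hr).const_mul 2).mul_const c
  simp only [sub_sq]
  exact ((integrable_pow_gammaMeasure ha hr 2).sub hlin).add (integrable_const _)

theorem integral_sub_sq_gammaMeasure {a r : ℝ} (ha : 0 < a) (hr : 0 < r) (c : ℝ) :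
    ∫ x, (x - c) ^ 2 ∂gammaMeasure a r = a / r ^ 2 + (a / r - c) ^ 2 := by
  have := isProbabilityMeasure_gammaMeasure ha hr
  have hsq := integrable_pow_gammaMeasure ha hr 2
  have hlin := ((integrable_id_gammaMeasure ha hr).const_mul 2).mul_const c
  have hsecond : ∫ x, x ^ 2 ∂gammaMeasure a r = a * (a + 1) / r ^ 2 := by
    rw [integral_pow_gammaMeasure ha hr, Nat.cast_ofNat, ← one_add_one_eq_two, ← add_assoc,
      Real.Gamma_add_one (by positivity), Real.Gamma_add_one ha.ne']
    field_simp
  simp_rw [fun x : ℝ ↦ sub_sq x c]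
  rw [integral_add (by exact hsq.sub hlin) (integrable_const _), integral_sub hsq hlin,
    integral_mul_const, integral_const_mul, integral_id_gammaMeasure ha hr, hsecond,
    integral_const, probReal_univ, one_smul]
  field_simp
  ring

theorem tendsto_integral_gammaMeasure [CompleteSpace E] {ι : Type*} {l : Filter ι} {a r : ι → ℝ}
    {c M : ℝ} {f : ℝ → E} (ha : ∀ᶠ i in l, 0 < a i) (hr : ∀ᶠ i in l, 0 < r i)
    (hmean : Tendsto (fun i ↦ a i / r i) l (𝓝 c))
    (hvar : Tendsto (fun i ↦ a i / r i ^ 2) l (𝓝 0))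
    (hmeas : AEStronglyMeasurable f (volume.restrict (Ioi 0)))
    (hbdd : ∀ᵐ x ∂volume.restrict (Ioi 0), ‖f x‖ ≤ M) (hcont : ContinuousAt f c) :
    Tendsto (fun i ↦ ∫ x, f x ∂gammaMeasure (a i) (r i)) l (𝓝 (f c)) := by
  have hac (i : ι) := gammaMeasure_absolutelyContinuous_restrict_Ioi (a i) (r i)
  have hmsd : Tendsto (fun i ↦ ∫ x, dist x c ^ 2 ∂gammaMeasure (a i) (r i)) l (𝓝 0) := by
    have hlim : Tendsto (fun i ↦ a i / r i ^ 2 + (a i / r i - c) ^ 2) l (𝓝 0) := by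
      simpa using hvar.add ((hmean.sub_const c).pow 2)
    refine hlim.congr' ?_
    filter_upwards [ha, hr] with i hai hri
    simp only [Real.dist_eq, sq_abs, integral_sub_sq_gammaMeasure hai hri]
  refine tendsto_integral_of_tendsto_measureReal_compl ?_
    (fun U hU ↦ tendsto_measureReal_compl_of_tendsto_integral_dist_pow ?_ hmsd hU)
    (.of_forall fun i ↦ hmeas.mono_ac (hac i))
    (.of_forall fun i ↦ (hac i).ae_le hbdd) hcont
  · filter_upwards [ha, hr] with i hai hri using isProbabilityMeasure_gammaMeasure hai hri
  · filter_upwards [ha, hr] with i hai hri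
    simpa only [Real.dist_eq, sq_abs] using integrable_sub_sq_gammaMeasure hai hri c

end GammaMeasure

lemma quasiMeasurePreserving_inv_restrict_Ioi_zero :
    Measure.QuasiMeasurePreserving (fun x : ℝ ↦ x⁻¹) (volume.restrict (Ioi 0))
      (volume.restrict (Ioi 0)) := by
  refine ⟨measurable_inv, Measure.AbsolutelyContinuous.mk fun A hA hA0 ↦ ?_⟩
  rw [Measure.restrict_apply hA] at hA0
  rw [Measure.map_apply measurable_inv hA, Measure.restrict_apply (measurable_inv hA)]
  have himage : (fun x : ℝ ↦ x⁻¹) ⁻¹' A ∩ Ioi 0 = (fun x ↦ x⁻¹) '' (A ∩ Ioi 0) := by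
    ext x
    simp [image_inv_eq_inv]
  rw [himage]
  exact addHaar_image_eq_zero_of_differentiableOn_of_addHaar_eq_zero volume
    (fun x hx ↦ (differentiableAt_inv (ne_of_gt hx.2)).differentiableWithinAt) hA0

lemma continuousOn_of_dist_le_mul_rpow_dist {X Y : Type*} [PseudoMetricSpace X]
    [PseudoMetricSpace Y] {f : X → Y} {s : Set X} {L ρ : ℝ} (hρ : 0 < ρ)
    (hf : ∀ x ∈ s, ∀ y ∈ s, dist (f x) (f y) ≤ L * dist x y ^ ρ) : ContinuousOn f s := by
  intro y hy
  have hmodulus : Tendsto (fun x ↦ L * dist x y ^ ρ) (𝓝[s] y) (𝓝 0) := by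
    have hcont : Continuous fun x ↦ L * dist x y ^ ρ := by fun_prop (disch := exact hρ.le)
    simpa [Real.zero_rpow hρ.ne'] using hcont.continuousWithinAt (s := s) (x := y) |>.tendsto
  refine tendsto_iff_dist_tendsto_zero.mpr
    (squeeze_zero' (.of_forall fun x ↦ dist_nonneg) ?_ hmodulus)
  filter_upwards [self_mem_nhdsWithin] with x hx using hf x hx y hy

theorem integral_gammaMeasure_natCast {E : Type*} [NormedAddCommGroup E] [NormedSpace ℝ E]
    {N : ℕ} (hN : N ≠ 0) {r : ℝ} (hr : 0 < r) (f : ℝ → E) :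
    ∫ s, f s ∂gammaMeasure N r = (1 / (Nat.factorial (N - 1) : ℝ)) •
      ∫ s in Ioi 0, ((r * s) ^ N * Real.exp (-(r * s)) / s) • f s := by
  obtain ⟨n, rfl⟩ := Nat.exists_eq_add_one_of_ne_zero hN
  rw [integral_gammaMeasure_eq_integral_Ioi_smul (by positivity) hr, ← integral_smul]
  refine setIntegral_congr_fun measurableSet_Ioi fun s hs ↦ ?_
  have hs0 : s ≠ 0 := ne_of_gt hs
  rw [Real.rpow_natCast, Nat.cast_add_one, Real.Gamma_nat_eq_factorial, add_sub_cancel_right,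
    Real.rpow_natCast, Nat.add_sub_cancel, smul_smul]
  congr 1
  field_simp
  ring

theorem stmt_2_general {E : Type*} [NormedAddCommGroup E] [NormedSpace ℝ E] [CompleteSpace E]
    {φ : ℝ → E} {M lam : ℝ} (hmeas : AEStronglyMeasurable φ (volume.restrict (Ioi 0)))
    (hbdd : ∀ᵐ x ∂volume.restrict (Ioi 0), ‖φ x‖ ≤ M) (hlam : 0 < lam)
    (hcont : ContinuousAt φ lam) :
    Tendsto (fun N : ℕ ↦ (1 / (Nat.factorial (N - 1) : ℝ)) •
      ∫ s in Ioi (0 : ℝ), ((((N : ℝ) - 1) * s * lam) ^ N *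
        Real.exp (-(((N : ℝ) - 1) * s * lam)) / s) • φ (1 / s)) atTop (𝓝 (φ lam)) := by
  have hrate : ∀ᶠ N : ℕ in atTop, 0 < ((N : ℝ) - 1) * lam := by
    filter_upwards [eventually_gt_atTop 1] with N hN
    exact mul_pos (sub_pos.mpr (Nat.one_lt_cast.mpr hN)) hlam
  have hmean : Tendsto (fun N : ℕ ↦ (N : ℝ) / ((N - 1) * lam)) atTop (𝓝 lam⁻¹) := by
    simpa [div_div, sub_eq_add_neg] using (tendsto_natCast_div_add_atTop (-1 : ℝ)).div_const lam
  have hvar : Tendsto (fun N : ℕ ↦ (N : ℝ) / ((N - 1) * lam) ^ 2) atTop (𝓝 0) := by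
    have hinv : Tendsto (fun N : ℕ ↦ (((N : ℝ) - 1) * lam)⁻¹) atTop (𝓝 0) :=
      ((tendsto_atTop_add_const_right _ (-1) tendsto_natCast_atTop_atTop).atTop_mul_const
        hlam).inv_tendsto_atTop
    simpa [sq, div_eq_mul_inv, mul_assoc] using hmean.mul hinv
  have hlim := tendsto_integral_gammaMeasure (f := fun s ↦ φ s⁻¹)
    (eventually_gt_atTop 0 |>.mono fun N hN ↦ Nat.cast_pos.mpr hN) hrate hmean hvar
    (hmeas.comp_quasiMeasurePreserving quasiMeasurePreserving_inv_restrict_Ioi_zero)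
    (quasiMeasurePreserving_inv_restrict_Ioi_zero.ae hbdd)
    (.comp (by rwa [inv_inv]) (continuousAt_inv₀ (inv_ne_zero hlam.ne')))
  rw [inv_inv] at hlim
  refine hlim.congr' ?_
  filter_upwards [eventually_ne_atTop 0, hrate] with N hN hr
  simp only [integral_gammaMeasure_natCast hN hr, mul_right_comm _ lam, one_div]

/-- Let `ρ ∈ (0,1]` and `φ : (0,∞) → ℝ` bounded and uniformly `ρ`-Hölder. For an integer
`N ≥ 2` and `λ > 0` set
`μ_N(λ) := (1/(N−1)!) ∫_0^∞ φ(1/s) ((N−1)sλ)^N e^{−(N−1)sλ} ds/s`.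
Then `μ_N(λ) → φ(λ)` as `N → ∞`, for every `λ > 0`. -/
theorem stmt_2 (ρ : ℝ) (hρ : ρ ∈ Set.Ioc (0 : ℝ) 1) (φ : ℝ → ℝ) (M L : ℝ)
    (hbdd : ∀ x ∈ Set.Ioi (0 : ℝ), |φ x| ≤ M)
    (hHol : ∀ x ∈ Set.Ioi (0 : ℝ), ∀ y ∈ Set.Ioi (0 : ℝ), |φ x - φ y| ≤ L * |x - y| ^ ρ)
    (lam : ℝ) (hlam : 0 < lam) :
    Tendsto (fun N : ℕ =>
      (1 / (Nat.factorial (N - 1) : ℝ)) *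
        ∫ s in Ioi (0 : ℝ),
          φ (1 / s) * (((N : ℝ) - 1) * s * lam) ^ N *
            Real.exp (-(((N : ℝ) - 1) * s * lam)) / s)
      atTop (nhds (φ lam)) := by
  have hφ : ContinuousOn φ (Ioi 0) := continuousOn_of_dist_le_mul_rpow_dist hρ.1 hHol
  simpa only [smul_eq_mul, mul_comm _ (φ _), mul_div_assoc, mul_assoc] using
    stmt_2_general (hφ.aestronglyMeasurable measurableSet_Ioi)
      (ae_restrict_of_forall_mem measurableSet_Ioi hbdd) hlam (hφ.continuousAt (Ioi_mem_nhds hlam))
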